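/- For every ε > 0 there exists an infinite sequence t₁ < t₂ < ⋯ of positive integers containing no 3-term geometric progression with rational ratio, such that for all sufficiently large n, tₙ − tₙ₋₁ ≤ exp(2√(log 2 · log tₙ + ((3+ε)/2)·√(log 2 · log tₙ)·log log tₙ)). -/

import Mathlib

open Real

/-- The cut-off exponent at scale `j`. -/
def hexp (j : ℕ) : ℕ := Nat.sqrt (2 * j)

/-- The set determined by the choice `k` of exponents. -/
def gpSet (k : ℕ → ℕ) : Set ℕ :=
  {x | 0 < x ∧ ∀ q : ℕ, q.Prime → q ∣ x →
    x.factorization q = if q ≤ 2 ^ hexp (Nat.log 2 x) then 1 else k q + 1}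

lemma hexp_mono {i j : ℕ} (h : i ≤ j) : hexp i ≤ hexp j :=
  Nat.sqrt_le_sqrt (by omega)

lemma gpSet_not_dvd (k : ℕ → ℕ) {x y : ℕ} (hx : x ∈ gpSet k) (hy : y ∈ gpSet k) (hyx : y < x) :
    ¬ x ∣ y * y := by
  intro hd
  have hx0 : x ≠ 0 := hx.1.ne'
  have hy0 : y ≠ 0 := hy.1.ne'
  have : x ∣ y := by
    rw [← Nat.factorization_le_iff_dvd hx0 hy0]
    intro q
    by_cases hq : q.Prime
    · by_cases hqx : q ∣ x
      · have hqy : q ∣ y := by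
          have := hqx.trans hd
          exact (hq.dvd_mul.1 this).elim id id
        rw [hx.2 q hq hqx, hy.2 q hq hqy]
        have hP : 2 ^ hexp (Nat.log 2 y) ≤ 2 ^ hexp (Nat.log 2 x) :=
          Nat.pow_le_pow_right (by norm_num) (hexp_mono (Nat.log_mono_right hyx.le))
        split_ifs <;> omega
      · rw [Nat.factorization_eq_zero_of_not_dvd hqx]; exact Nat.zero_le _
    · rw [Nat.factorization_eq_zero_of_not_prime x hq]; exact Nat.zero_le _
  exact absurd (Nat.le_of_dvd hy.1 this) (by omega)

open MeasureTheory ProbabilityTheory in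
lemma indep_boxes (ν : Measure ℕ) [IsProbabilityMeasure ν] (C : Finset ℕ) (L : ℕ → Finset ℕ)
    (hL : ∀ c ∈ C, ∀ d ∈ C, c ≠ d → Disjoint (L c) (L d)) (t : ℕ → Set ℕ) :
    Measure.infinitePi (fun _ : ℕ => ν) (⋂ c ∈ C, (Set.pi (L c : Set ℕ) t)ᶜ) =
      ∏ c ∈ C, Measure.infinitePi (fun _ : ℕ => ν) (Set.pi (L c : Set ℕ) t)ᶜ := by
  classical
  set μ := Measure.infinitePi (fun _ : ℕ => ν)
  have hm : ∀ c, MeasurableSet (Set.pi (L c : Set ℕ) t) := fun c =>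
    MeasurableSet.pi (Finset.countable_toSet _) (fun i _ => MeasurableSet.of_discrete)
  have hi : iIndepSet (fun c : C => Set.pi (L c : Set ℕ) t) μ := by
    rw [iIndepSet_iff_meas_biInter (fun c : C => hm c)]
    intro s
    have : (⋂ i ∈ s, Set.pi (L i : Set ℕ) t) =
        Set.pi ((s.biUnion (fun i => L i) : Finset ℕ) : Set ℕ) t := by
      ext ω
      simp [Set.mem_pi]
      grind
    rw [this, Measure.infinitePi_pi _ (fun i _ => MeasurableSet.of_discrete), Finset.prod_biUnion]
    · refine Finset.prod_congr rfl fun i _ => ?_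
      rw [Measure.infinitePi_pi _ (fun i _ => MeasurableSet.of_discrete)]
    · intro a _ b _ hab
      exact hL a a.2 b b.2 (fun h => hab (Subtype.ext h))
  have := (iIndepSet_iff _ _).1 hi Finset.univ (f := fun c => (Set.pi (L c : Set ℕ) t)ᶜ)
    (fun i _ => (MeasurableSpace.measurableSet_generateFrom (by simp)).compl)
  rw [← Finset.prod_coe_sort C (fun c => μ (Set.pi (L c : Set ℕ) t)ᶜ), ← this]
  congr 1
  ext ω
  simp

lemma inv_sq_sum (n : ℕ) (hn : 3 ≤ n) :
    ∑ d ∈ Finset.Icc 2 n, (1 : ℝ) / (d : ℝ) ^ 2 ≤ 25 / 36 - 1 / n := by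
  induction n, hn using Nat.le_induction with
  | base => norm_num [Finset.sum_Icc_succ_top]
  | succ n hn ih =>
    rw [Finset.sum_Icc_succ_top (by omega)]
    have h3 : (3 : ℝ) ≤ n := by exact_mod_cast hn
    have : (1 : ℝ) / ((n + 1 : ℕ) : ℝ) ^ 2 ≤ 1 / n - 1 / ((n + 1 : ℕ) : ℝ) := by
      push_cast
      rw [div_sub_div _ _ (by positivity) (by positivity), div_le_div_iff₀ (by positivity) (by positivity)]
      nlinarith
    linarith

lemma card_mult (a H r : ℕ) (hr : 0 < r) :
    (((Finset.Ico a (a + H)).filter (fun c => r ∣ c)).card : ℝ) ≤ H / r + 1 := by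
  have h := Nat.Ico_filter_modEq_card a (a + H) hr 0
  have h1 : (Finset.Ico a (a + H)).filter (fun c => r ∣ c) =
      (Finset.Ico a (a + H)).filter (fun c => c ≡ 0 [MOD r]) := by
    ext c; simp [Nat.modEq_zero_iff_dvd]
  rw [h1]
  have hrr : (0 : ℚ) < r := by exact_mod_cast hr
  have h2 : (((Finset.Ico a (a + H)).filter (fun c => c ≡ 0 [MOD r])).card : ℚ) ≤ H / r + 1 := by
    have : (((Finset.Ico a (a + H)).filter (fun c => c ≡ 0 [MOD r])).card : ℚ) =
      (((((Finset.Ico a (a + H)).filter (fun c => c ≡ 0 [MOD r])).card : ℕ) : ℤ) : ℚ) := by simp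
    rw [this, h]
    push_cast
    apply max_le
    · have e1 := Int.ceil_lt_add_one (((a : ℚ) + H - 0) / r)
      have e2 := Int.le_ceil (((a : ℚ) - 0) / r)
      have e3 : ((a : ℚ) + H - 0) / r = ((a : ℚ) - 0) / r + H / r := by ring
      rw [e3] at e1
      rw [e3]
      linarith
    · positivity
  have h3 := (Rat.cast_le (K := ℝ)).2 h2
  push_cast at h3
  exact h3

/-- Elements of the block `[a, a+H)` with no square of a prime `p ≤ H` as a divisor. -/
def cand (a H : ℕ) : Finset ℕ :=
  (Finset.Ico a (a + H)).filter (fun c => ∀ p ∈ Nat.primesLE H, ¬ p ^ 2 ∣ c)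

lemma card_cand (a H : ℕ) (hH : 2500 ≤ H) : (H : ℝ) / 32 ≤ (cand a H).card := by
  classical
  have h1 : (Finset.Ico a (a + H)) ⊆ cand a H ∪ (Nat.primesLE H).biUnion
      (fun p => (Finset.Ico a (a + H)).filter (fun c => p ^ 2 ∣ c)) := by
    intro c hc
    by_cases h : ∀ p ∈ Nat.primesLE H, ¬ p ^ 2 ∣ c
    · exact Finset.mem_union_left _ (Finset.mem_filter.2 ⟨hc, h⟩)
    · push Not at h
      obtain ⟨p, hp, hpc⟩ := h
      exact Finset.mem_union_right _ (Finset.mem_biUnion.2 ⟨p, hp, Finset.mem_filter.2 ⟨hc, hpc⟩⟩)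
  have h2 := (Finset.card_le_card h1).trans (Finset.card_union_le _ _)
  have h3 := Finset.card_biUnion_le (s := Nat.primesLE H)
      (t := fun p => (Finset.Ico a (a + H)).filter (fun c => p ^ 2 ∣ c))
  have h4 : (H : ℝ) ≤ (cand a H).card + ∑ p ∈ Nat.primesLE H,
      (((Finset.Ico a (a + H)).filter (fun c => p ^ 2 ∣ c)).card : ℝ) := by
    have : (Finset.Ico a (a + H)).card = H := by simp
    exact_mod_cast (by omega : H ≤ (cand a H).card + ∑ p ∈ Nat.primesLE H,
      ((Finset.Ico a (a + H)).filter (fun c => p ^ 2 ∣ c)).card)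
  have h5 : ∑ p ∈ Nat.primesLE H,
      (((Finset.Ico a (a + H)).filter (fun c => p ^ 2 ∣ c)).card : ℝ) ≤
      ∑ p ∈ Nat.primesLE H, ((H : ℝ) * (1 / (p : ℝ) ^ 2) + 1) := by
    refine Finset.sum_le_sum fun p hp => ?_
    have hp' : p.Prime := (Nat.mem_primesLE.1 hp).2
    have := card_mult a H (p ^ 2) (pow_pos hp'.pos 2)
    push_cast at this
    rw [mul_one_div]
    exact this
  rw [Finset.sum_add_distrib, ← Finset.mul_sum] at h5
  have h6 : ∑ p ∈ Nat.primesLE H, (1 : ℝ) / (p : ℝ) ^ 2 ≤ 25 / 36 := by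
    have h7 : ∑ p ∈ Nat.primesLE H, (1 : ℝ) / (p : ℝ) ^ 2 ≤
        ∑ d ∈ Finset.Icc 2 H, (1 : ℝ) / (d : ℝ) ^ 2 := by
      refine Finset.sum_le_sum_of_subset_of_nonneg ?_ (fun _ _ _ => by positivity)
      intro p hp
      have := Nat.mem_primesLE.1 hp
      exact Finset.mem_Icc.2 ⟨this.2.two_le, this.1⟩
    have := inv_sq_sum H (by omega)
    have : (0 : ℝ) ≤ 1 / H := by positivity
    linarith
  have h8 : ((Nat.primesLE H).card : ℝ) ≤ 8 * H / 30 + 18 := by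
    rw [Nat.primesLE_card_eq_primeCounting]
    have := Nat.primeCounting_add_le (a := 30) (k := 30) (by norm_num) le_rfl (H - 30)
    rw [show 30 + (H - 30) = H by omega, show Nat.totient 30 = 8 by decide,
      show Nat.primeCounting 30 = 10 by decide] at this
    have h9 : 30 * Nat.primeCounting H ≤ 8 * H + 540 := by omega
    have h10 : (30 : ℝ) * Nat.primeCounting H ≤ 8 * H + 540 := by exact_mod_cast h9
    linarith
  have hHr : (2500 : ℝ) ≤ H := by exact_mod_cast hH
  have h11 : (H : ℝ) * ∑ p ∈ Nat.primesLE H, (1 : ℝ) / (p : ℝ) ^ 2 ≤ H * (25 / 36) :=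
    mul_le_mul_of_nonneg_left h6 (by positivity)
  simp only [Finset.sum_const, nsmul_eq_mul, mul_one] at h5
  linarith

/-- Fair geometric distribution. -/
noncomputable def nuGeo : MeasureTheory.Measure ℕ :=
  ProbabilityTheory.geometricMeasure ⟨1 / 2, by norm_num, by norm_num⟩

instance : MeasureTheory.IsProbabilityMeasure nuGeo := by
  unfold nuGeo; infer_instance

lemma nuGeo_singleton (n : ℕ) : nuGeo {n} = ENNReal.ofReal ((1 / 2) ^ (n + 1)) := by
  unfold nuGeo
  rw [ProbabilityTheory.geometricMeasure_singleton]
  · congr 1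
    norm_num [pow_succ]
  · intro h
    have := congrArg Subtype.val h
    norm_num at this

/-- The product measure. -/
noncomputable def muGeo : MeasureTheory.Measure (ℕ → ℕ) :=
  MeasureTheory.Measure.infinitePi (fun _ : ℕ => nuGeo)

instance : MeasureTheory.IsProbabilityMeasure muGeo := by
  unfold muGeo; infer_instance

/-- The large prime factors of `c`. -/
def largeP (h c : ℕ) : Finset ℕ := c.primeFactors.filter (fun q => 2 ^ h < q)

lemma largeP_sum (h j c : ℕ) (hh : 0 < h) (hc0 : c ≠ 0) (hc : c < 2 ^ (j + 1)) :
    ∑ q ∈ largeP h c, c.factorization q ≤ j / h := by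
  have h1 : ∏ q ∈ largeP h c, q ^ c.factorization q ≤ c := by
    calc ∏ q ∈ largeP h c, q ^ c.factorization q
        ≤ ∏ q ∈ c.primeFactors, q ^ c.factorization q := by
          refine Finset.prod_le_prod_of_subset_of_one_le' (Finset.filter_subset _ _) ?_
          intro q hq _
          exact Nat.one_le_pow _ _ (Nat.prime_of_mem_primeFactors hq).pos
      _ = c := Nat.prod_factorization_pow_eq_self hc0
  have h2 : ∏ q ∈ largeP h c, (2 ^ h) ^ c.factorization q ≤
      ∏ q ∈ largeP h c, q ^ c.factorization q := by
    refine Finset.prod_le_prod' fun q hq => ?_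
    exact Nat.pow_le_pow_left (Finset.mem_filter.1 hq).2.le _
  rw [Finset.prod_pow_eq_pow_sum, ← pow_mul] at h2
  have h3 := (Nat.pow_lt_pow_iff_right (by norm_num : 1 < 2)).1 ((h2.trans h1).trans_lt hc)
  rw [Nat.le_div_iff_mul_le hh]
  rw [mul_comm]; omega

open MeasureTheory in
lemma block_prob (j a : ℕ) (hh : 2500 ≤ 2 ^ hexp j) (ha : 2 ^ j ≤ a)
    (ha' : a + 2 ^ hexp j ≤ 2 ^ (j + 1)) :
    muGeo {k | ∀ x ∈ Finset.Ico a (a + 2 ^ hexp j), x ∉ gpSet k} ≤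
      ENNReal.ofReal (exp (-((2 : ℝ) ^ hexp j / 32 * (1 / 2) ^ (j / hexp j)))) := by
  classical
  set h := hexp j with hdef
  have hpos : 0 < h := by
    rcases Nat.eq_zero_or_pos h with h0 | h0
    · rw [h0] at hh; norm_num at hh
    · exact h0
  set C := cand a (2 ^ h) with hC
  have hCm : ∀ c ∈ C, a ≤ c ∧ c < a + 2 ^ h := fun c hc =>
    Finset.mem_Ico.1 (Finset.mem_filter.1 hc).1
  have hpow : 0 < 2 ^ j := by positivity
  have hC0 : ∀ c ∈ C, c ≠ 0 := fun c hc => by have := hCm c hc; omega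
  have huniq : ∀ c ∈ C, ∀ d ∈ C, ∀ q, 2 ^ h < q → q ∣ c → q ∣ d → c = d := by
    intro c hc d hd q hq hqc hqd
    have h1 := hCm c hc
    have h2 := hCm d hd
    by_contra hne
    rcases Nat.lt_or_gt_of_ne hne with hlt | hlt
    · have := Nat.le_of_dvd (by omega) (Nat.dvd_sub hqd hqc)
      omega
    · have := Nat.le_of_dvd (by omega) (Nat.dvd_sub hqc hqd)
      omega
  set t : ℕ → Set ℕ := fun q => {n | ∀ c ∈ C, q ∣ c → c.factorization q = n + 1} with ht
  have hdisj : ∀ c ∈ C, ∀ d ∈ C, c ≠ d → Disjoint (largeP h c) (largeP h d) := by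
    intro c hc d hd hne
    rw [Finset.disjoint_left]
    intro q hqc hqd
    have h1 := Finset.mem_filter.1 hqc
    have h2 := Finset.mem_filter.1 hqd
    exact hne (huniq c hc d hd q h1.2 (Nat.dvd_of_mem_primeFactors h1.1)
      (Nat.dvd_of_mem_primeFactors h2.1))
  have hsub : {k | ∀ x ∈ Finset.Ico a (a + 2 ^ h), x ∉ gpSet k} ⊆
      ⋂ c ∈ C, (Set.pi (largeP h c : Set ℕ) t)ᶜ := by
    intro k hk
    simp only [Set.mem_iInter, Set.mem_compl_iff]
    intro c hc hkc
    refine hk c (Finset.mem_filter.1 hc).1 ⟨Nat.pos_of_ne_zero (hC0 c hc), ?_⟩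
    intro q hq hqc
    have hlog : Nat.log 2 c = j := by
      have := hCm c hc
      exact (Nat.log_eq_iff (Or.inr ⟨by norm_num, hC0 c hc⟩)).2 ⟨by omega, by omega⟩
    rw [hlog, ← hdef]
    split_ifs with hqh
    · have h1 := (Finset.mem_filter.1 hc).2 q (Nat.mem_primesLE.2 ⟨hqh, hq⟩)
      have h2 : 1 ≤ c.factorization q :=
        (hq.dvd_iff_one_le_factorization (hC0 c hc)).1 hqc
      have h3 : ¬ 2 ≤ c.factorization q := by
        rwa [← hq.pow_dvd_iff_le_factorization (hC0 c hc)]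
      omega
    · have h1 : q ∈ largeP h c :=
        Finset.mem_filter.2 ⟨Nat.mem_primeFactors.2 ⟨hq, hqc, hC0 c hc⟩, by omega⟩
      exact hkc q h1 c hc hqc
  have hS : ∀ c ∈ C, ENNReal.ofReal ((1 / 2) ^ (j / h)) ≤
      muGeo (Set.pi (largeP h c : Set ℕ) t) := by
    intro c hc
    unfold muGeo
    rw [Measure.infinitePi_pi _ (fun i _ => MeasurableSet.of_discrete)]
    calc ENNReal.ofReal ((1 / 2) ^ (j / h))
        ≤ ENNReal.ofReal ((1 / 2) ^ (∑ q ∈ largeP h c, c.factorization q)) := by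
          apply ENNReal.ofReal_le_ofReal
          have := hCm c hc
          exact pow_le_pow_of_le_one (by norm_num) (by norm_num)
            (largeP_sum h j c hpos (hC0 c hc) (by omega))
      _ = ∏ q ∈ largeP h c, ENNReal.ofReal ((1 / 2) ^ (c.factorization q)) := by
          rw [← Finset.prod_pow_eq_pow_sum, ENNReal.ofReal_prod_of_nonneg]
          intro i _; positivity
      _ ≤ _ := by
          refine Finset.prod_le_prod' fun q hq => ?_
          have h1 := Finset.mem_filter.1 hq
          have hqp := Nat.prime_of_mem_primeFactors h1.1
          have hqc := Nat.dvd_of_mem_primeFactors h1.1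
          have h2 : 1 ≤ c.factorization q :=
            (hqp.dvd_iff_one_le_factorization (hC0 c hc)).1 hqc
          have h3 : ({c.factorization q - 1} : Set ℕ) ⊆ t q := by
            intro n hn
            rw [Set.mem_singleton_iff] at hn
            intro d hd hqd
            have := huniq c hc d hd q h1.2 hqc hqd
            subst this
            omega
          refine le_trans (le_of_eq ?_) (measure_mono h3)
          rw [nuGeo_singleton, Nat.sub_add_cancel h2]
  have hm : ∀ c, MeasurableSet (Set.pi (largeP h c : Set ℕ) t) := fun c =>
    MeasurableSet.pi (Finset.countable_toSet _) (fun i _ => MeasurableSet.of_discrete)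
  set p : ℝ := (1 / 2) ^ (j / h) with hp
  have hp0 : 0 ≤ p := by positivity
  calc muGeo {k | ∀ x ∈ Finset.Ico a (a + 2 ^ h), x ∉ gpSet k}
      ≤ muGeo (⋂ c ∈ C, (Set.pi (largeP h c : Set ℕ) t)ᶜ) := measure_mono hsub
    _ = ∏ c ∈ C, muGeo (Set.pi (largeP h c : Set ℕ) t)ᶜ := indep_boxes nuGeo C _ hdisj t
    _ ≤ ∏ c ∈ C, ENNReal.ofReal (exp (-p)) := by
        refine Finset.prod_le_prod' fun c hc => ?_
        rw [prob_compl_eq_one_sub (hm c)]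
        calc 1 - muGeo (Set.pi (largeP h c : Set ℕ) t) ≤ 1 - ENNReal.ofReal p :=
              tsub_le_tsub_left (hS c hc) _
          _ = ENNReal.ofReal (1 - p) := by rw [ENNReal.ofReal_sub _ hp0, ENNReal.ofReal_one]
          _ ≤ _ := ENNReal.ofReal_le_ofReal (by have := add_one_le_exp (-p); linarith)
    _ = ENNReal.ofReal (exp (-(C.card * p))) := by
        rw [Finset.prod_const, ← ENNReal.ofReal_pow (exp_pos _).le, ← exp_nat_mul]
        congr 2; ring
    _ ≤ _ := by
        apply ENNReal.ofReal_le_ofReal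
        apply exp_le_exp.2
        have h1 := card_cand a (2 ^ h) hh
        push_cast at h1
        have := mul_le_mul_of_nonneg_right h1 hp0
        linarith

lemma exp_growth (h : ℕ) (hh : 40 ≤ h) : (h + 1) ^ 4 * 2 ^ 12 ≤ 2 ^ h := by
  induction h, hh using Nat.le_induction with
  | base => norm_num
  | succ n hn ih =>
    have h1 : (40 * (n + 1 + 1)) ^ 4 ≤ (41 * (n + 1)) ^ 4 := Nat.pow_le_pow_left (by omega) 4
    rw [mul_pow, mul_pow] at h1
    rw [pow_succ 2 n]
    generalize (n + 1 + 1) ^ 4 = u at *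
    generalize (n + 1) ^ 4 = v at *
    generalize 2 ^ n = z at *
    norm_num at h1 ih ⊢
    linarith [Nat.zero_le v]

lemma hexp_ge (j : ℕ) (hj : 800 ≤ j) : 40 ≤ hexp j := Nat.le_sqrt.2 (by omega)

lemma hexp_le (j : ℕ) (hj : 800 ≤ j) : hexp j ≤ j := by
  have h1 : hexp j * hexp j ≤ 2 * j := Nat.sqrt_le (2 * j)
  have h2 := hexp_ge j hj
  nlinarith

lemma scale_est (j : ℕ) (hj : 800 ≤ j) :
    (2 : ℝ) * j + 1 ≤ (2 : ℝ) ^ hexp j / 32 * (1 / 2) ^ (j / hexp j) := by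
  have h40 := hexp_ge j hj
  have hlt : 2 * j < (hexp j + 1) * (hexp j + 1) := Nat.lt_succ_sqrt (2 * j)
  set h := hexp j
  set m := j / h with hm
  have hmh : m * h ≤ j := Nat.div_mul_le_self j h
  have hm2 : 2 * m ≤ h + 2 := by
    by_contra hcon
    have : h + 3 ≤ 2 * m := by omega
    nlinarith
  have key : (2 * j + 1) * 32 * 2 ^ m ≤ 2 ^ h := by
    have h1 : (2 * j + 1) * 32 * 2 ^ m ≤ (h + 1) ^ 2 * 2 ^ 5 * 2 ^ m := by
      have : 2 * j + 1 ≤ (h + 1) ^ 2 := by rw [sq]; omega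
      exact Nat.mul_le_mul_right _ (Nat.mul_le_mul this (by norm_num))
    refine h1.trans ?_
    rw [← Nat.pow_le_pow_iff_left (n := 2) (by norm_num)]
    calc ((h + 1) ^ 2 * 2 ^ 5 * 2 ^ m) ^ 2 = (h + 1) ^ 4 * 2 ^ 10 * 2 ^ (2 * m) := by ring
      _ ≤ (h + 1) ^ 4 * 2 ^ 10 * 2 ^ (h + 2) := by gcongr; norm_num
      _ = (h + 1) ^ 4 * 2 ^ 12 * 2 ^ h := by ring
      _ ≤ 2 ^ h * 2 ^ h := by gcongr; exact exp_growth h h40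
      _ = (2 ^ h) ^ 2 := by ring
  have key' : ((2 : ℝ) * j + 1) * 32 * 2 ^ m ≤ 2 ^ h := by exact_mod_cast key
  rw [one_div, inv_pow, ← div_eq_mul_inv, div_div, le_div_iff₀ (by positivity)]
  linarith

open MeasureTheory in
lemma exists_k : ∃ k : ℕ → ℕ, ∃ J : ℕ, 800 ≤ J ∧ ∀ w, 2 ^ J ≤ w → ∃ x ∈ gpSet k,
    2 ^ Nat.log 2 w ≤ x ∧
    w / 2 ^ hexp (Nat.log 2 w) * 2 ^ hexp (Nat.log 2 w) ≤ x ∧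
    x < w / 2 ^ hexp (Nat.log 2 w) * 2 ^ hexp (Nat.log 2 w) + 2 ^ hexp (Nat.log 2 w) := by
  classical
  let B : ℕ → Set (ℕ → ℕ) := fun j => {k | 800 ≤ j ∧ ∃ b ∈ Finset.range (2 ^ (j + 1)),
    2 ^ j ≤ b * 2 ^ hexp j ∧ b * 2 ^ hexp j + 2 ^ hexp j ≤ 2 ^ (j + 1) ∧
    ∀ x ∈ Finset.Ico (b * 2 ^ hexp j) (b * 2 ^ hexp j + 2 ^ hexp j), x ∉ gpSet k}
  have hB : ∀ j, muGeo (B j) ≤ ENNReal.ofReal ((1 / 2 : ℝ) ^ j) := by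
    intro j
    by_cases hj : 800 ≤ j
    · have h40 := hexp_ge j hj
      have hbig : 2500 ≤ 2 ^ hexp j :=
        le_trans (by norm_num) (Nat.pow_le_pow_right (by norm_num : 0 < 2) h40)
      have hsub : B j ⊆ ⋃ b ∈ Finset.range (2 ^ (j + 1)), {k | 2 ^ j ≤ b * 2 ^ hexp j ∧
          b * 2 ^ hexp j + 2 ^ hexp j ≤ 2 ^ (j + 1) ∧
          ∀ x ∈ Finset.Ico (b * 2 ^ hexp j) (b * 2 ^ hexp j + 2 ^ hexp j), x ∉ gpSet k} := by
        rintro k ⟨_, b, hb, hk⟩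
        exact Set.mem_biUnion hb hk
      have hexpb : exp (-((2 : ℝ) ^ hexp j / 32 * (1 / 2) ^ (j / hexp j))) ≤
          (1 / 2) ^ (2 * j + 1) := by
        have h1 := scale_est j hj
        calc exp (-((2 : ℝ) ^ hexp j / 32 * (1 / 2) ^ (j / hexp j)))
            ≤ exp (((2 * j + 1 : ℕ) : ℝ) * (-1)) := by
              apply exp_le_exp.2; push_cast; linarith
          _ = (exp (-1)) ^ (2 * j + 1) := exp_nat_mul _ _
          _ ≤ (1 / 2) ^ (2 * j + 1) := by
              apply pow_le_pow_left₀ (exp_pos _).le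
              rw [exp_neg, one_div]
              apply inv_anti₀ (by norm_num)
              have := add_one_le_exp (1 : ℝ)
              linarith
      calc muGeo (B j) ≤ _ := measure_mono hsub
        _ ≤ _ := measure_biUnion_finset_le _ _
        _ ≤ ∑ b ∈ Finset.range (2 ^ (j + 1)), ENNReal.ofReal ((1 / 2) ^ (2 * j + 1)) := by
            refine Finset.sum_le_sum fun b _ => ?_
            by_cases hb : 2 ^ j ≤ b * 2 ^ hexp j ∧ b * 2 ^ hexp j + 2 ^ hexp j ≤ 2 ^ (j + 1)
            · refine (measure_mono ?_).trans ((block_prob j (b * 2 ^ hexp j) hbig hb.1 hb.2).trans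
                (ENNReal.ofReal_le_ofReal hexpb))
              intro k hk
              exact hk.2.2
            · refine le_of_eq_of_le ?_ (zero_le)
              convert measure_empty (μ := muGeo)
              ext k
              simp only [Set.mem_setOf_eq, Set.mem_empty_iff_false, iff_false]
              exact fun hk => hb ⟨hk.1, hk.2.1⟩
        _ = ENNReal.ofReal ((1 / 2 : ℝ) ^ j) := by
            rw [← ENNReal.ofReal_sum_of_nonneg (fun _ _ => by positivity)]
            congr 1
            simp only [Finset.sum_const, Finset.card_range, nsmul_eq_mul]
            push_cast
            rw [show 2 * j + 1 = (j + 1) + j by ring, pow_add _ (j + 1) j, ← mul_assoc, ← mul_pow]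
            norm_num
    · refine le_of_eq_of_le ?_ (zero_le)
      convert measure_empty (μ := muGeo)
      ext k
      simp only [B, Set.mem_setOf_eq, Set.mem_empty_iff_false, iff_false]
      exact fun hk => hj hk.1
  have hsum : ∑' j, muGeo (B j) ≠ ⊤ := by
    have h1 : Summable (fun j : ℕ => (1 / 2 : ℝ) ^ j) := summable_geometric_two
    exact ne_top_of_le_ne_top h1.tsum_ofReal_ne_top (ENNReal.tsum_le_tsum hB)
  obtain ⟨k, hk⟩ := (ae_eventually_notMem hsum).exists
  obtain ⟨J, hJ⟩ := Filter.eventually_atTop.1 hk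
  refine ⟨k, max J 800, le_max_right _ _, fun w hw => ?_⟩
  have hw0 : w ≠ 0 := by
    have : 0 < 2 ^ max J 800 := by positivity
    omega
  have hjJ : max J 800 ≤ Nat.log 2 w := Nat.le_log_of_pow_le (by norm_num) hw
  set j := Nat.log 2 w with hj
  have hj800 : 800 ≤ j := (le_max_right _ _).trans hjJ
  have hjk := hJ j ((le_max_left _ _).trans hjJ)
  have hle := hexp_le j hj800
  have hwl : 2 ^ j ≤ w := Nat.pow_log_le_self 2 hw0
  have hwu : w < 2 ^ (j + 1) := Nat.lt_pow_succ_log_self (by norm_num) w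
  have hHpos : 0 < 2 ^ hexp j := by positivity
  have hb1 : 2 ^ j ≤ w / 2 ^ hexp j * 2 ^ hexp j := by
    have h1 : 2 ^ j = 2 ^ (j - hexp j) * 2 ^ hexp j := by rw [← pow_add]; congr 1; omega
    rw [h1]
    refine Nat.mul_le_mul_right _ ?_
    rw [Nat.le_div_iff_mul_le hHpos, ← h1]
    exact hwl
  have hb2 : w / 2 ^ hexp j * 2 ^ hexp j + 2 ^ hexp j ≤ 2 ^ (j + 1) := by
    have h1 : 2 ^ (j + 1) = 2 ^ (j + 1 - hexp j) * 2 ^ hexp j := by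
      rw [← pow_add]; congr 1; omega
    have h2 : w / 2 ^ hexp j < 2 ^ (j + 1 - hexp j) := by
      rw [Nat.div_lt_iff_lt_mul hHpos, ← h1]; exact hwu
    calc w / 2 ^ hexp j * 2 ^ hexp j + 2 ^ hexp j = (w / 2 ^ hexp j + 1) * 2 ^ hexp j := by ring
      _ ≤ 2 ^ (j + 1 - hexp j) * 2 ^ hexp j := Nat.mul_le_mul_right _ h2
      _ = 2 ^ (j + 1) := h1.symm
  by_contra hcon
  apply hjk
  refine ⟨hj800, w / 2 ^ hexp j, Finset.mem_range.2 ((Nat.div_le_self _ _).trans_lt hwu),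
    hb1, hb2, ?_⟩
  intro x hx hxk
  have := Finset.mem_Ico.1 hx
  exact hcon ⟨x, hxk, hb1.trans this.1, this.1, this.2⟩

lemma final_bound (ε : ℝ) (hε : 0 < ε) (x : ℕ) (hx : 2 ^ 800 ≤ x) :
    (2 : ℝ) * 2 ^ hexp (Nat.log 2 x) ≤ exp (2 * Real.sqrt (log 2 * log x +
            ((3 + ε) / 2) * Real.sqrt (log 2 * log x) * log (log x))) := by
  have hx0 : x ≠ 0 := by
    have : 0 < 2 ^ 800 := by positivity
    omega
  have hj : 800 ≤ Nat.log 2 x := Nat.le_log_of_pow_le (by norm_num) hx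
  have hxl : 2 ^ Nat.log 2 x ≤ x := Nat.pow_log_le_self 2 hx0
  set j := Nat.log 2 x
  have h40 := hexp_ge j hj
  have hsq : hexp j * hexp j ≤ 2 * j := Nat.sqrt_le (2 * j)
  set h := hexp j
  have hl2 : (0.69 : ℝ) < log 2 := by have := log_two_gt_d9; linarith
  have hl20 : (0 : ℝ) < log 2 := by linarith
  have hjr : (800 : ℝ) ≤ j := by exact_mod_cast hj
  have hlog : (j : ℝ) * log 2 ≤ log x := by
    rw [← log_pow]
    apply log_le_log (by positivity)
    exact_mod_cast hxl
  have hlog1 : 1 ≤ log x := by nlinarith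
  have hll : 0 ≤ log (log x) := log_nonneg hlog1
  have h1 : ((h : ℝ) + 1) / 2 * log 2 ≤ Real.sqrt (log 2 * log x +
            ((3 + ε) / 2) * Real.sqrt (log 2 * log x) * log (log x)) := by
    apply Real.le_sqrt_of_sq_le
    have h2 : ((h : ℝ) + 1) ^ 2 ≤ 4 * j := by
      have h3 : (h : ℝ) * h ≤ 2 * j := by exact_mod_cast hsq
      have h4 : (40 : ℝ) ≤ h := by exact_mod_cast h40
      nlinarith
    have h5 : 0 ≤ ((3 + ε) / 2) * Real.sqrt (log 2 * log x) * log (log x) := by positivity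
    have h6 : (((h : ℝ) + 1) / 2 * log 2) ^ 2 ≤ log 2 * (j * log 2) := by
      have h7 : (((h : ℝ) + 1) / 2 * log 2) ^ 2 = ((h : ℝ) + 1) ^ 2 / 4 * (log 2 * log 2) := by ring
      rw [h7]
      have h8 : ((h : ℝ) + 1) ^ 2 / 4 ≤ j := by linarith
      have h9 := mul_le_mul_of_nonneg_right h8 (mul_pos hl20 hl20).le
      linarith
    have h10 := mul_le_mul_of_nonneg_left hlog hl20.le
    linarith
  calc (2 : ℝ) * 2 ^ h = 2 ^ (h + 1) := by ring
    _ = exp (((h + 1 : ℕ) : ℝ) * log 2) := by rw [exp_nat_mul, exp_log (by norm_num)]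
    _ ≤ _ := by
      apply exp_le_exp.2
      push_cast
      linarith

/-- There exists a sequence with small gaps containing no 3-term geometric progression
with rational ratio (equivalently, no triple a < b < c in the set with b² = a·c). -/
theorem gpf_small_gaps (ε : ℝ) (hε : 0 < ε) :
    ∃ t : ℕ → ℕ, StrictMono t ∧ (∀ n, 0 < t n) ∧
      (∀ a b c : ℕ, a ∈ Set.range t → b ∈ Set.range t → c ∈ Set.range t →
        a < b → b < c → b * b ≠ a * c) ∧
      ∃ N : ℕ, ∀ n ≥ N,
        ((t (n + 1) : ℝ) - t n) ≤
          exp (2 * Real.sqrt (log 2 * log (t (n + 1)) +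
            ((3 + ε) / 2) * Real.sqrt (log 2 * log (t (n + 1))) * log (log (t (n + 1))))) := by
  obtain ⟨k, J, hJ8, hJ⟩ := exists_k
  have hinf : (setOf (fun x => x ∈ gpSet k)).Infinite := by
    rw [Set.infinite_iff_exists_gt]
    intro n
    obtain ⟨x, hx, hx1, -⟩ := hJ (2 ^ max J n)
      (Nat.pow_le_pow_right (by norm_num) (le_max_left _ _))
    refine ⟨x, hx, ?_⟩
    rw [Nat.log_pow (by norm_num)] at hx1
    have h1 : n < 2 ^ n := Nat.lt_two_pow_self
    have h2 : 2 ^ n ≤ 2 ^ max J n := Nat.pow_le_pow_right (by norm_num) (le_max_right _ _)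
    omega
  set t := Nat.nth (fun x => x ∈ gpSet k) with ht
  have hmono : StrictMono t := Nat.nth_strictMono hinf
  have hmem : ∀ n, t n ∈ gpSet k := fun n => Nat.nth_mem_of_infinite hinf n
  refine ⟨t, hmono, fun n => (hmem n).1, ?_, 2 ^ J, ?_⟩
  · rintro _ _ _ ⟨a, rfl⟩ ⟨b, rfl⟩ ⟨c, rfl⟩ _ hbc h
    exact gpSet_not_dvd k (hmem c) (hmem b) hbc ⟨t a, by rw [h, mul_comm]⟩
  · intro n hn
    have hnt : n ≤ t n := hmono.id_le n
    have hlt : t n < t (n + 1) := hmono (Nat.lt_succ_self n)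
    have h800 : 2 ^ 800 ≤ t (n + 1) := by
      have : 2 ^ 800 ≤ 2 ^ J := Nat.pow_le_pow_right (by norm_num) hJ8
      omega
    refine le_trans ?_ (final_bound ε hε (t (n + 1)) h800)
    have key : t (n + 1) ≤ t n + 2 * 2 ^ hexp (Nat.log 2 (t (n + 1))) := by
      by_contra hcon
      push Not at hcon
      set x := t (n + 1)
      set H := 2 ^ hexp (Nat.log 2 x) with hH
      have hHpos : 0 < H := by positivity
      have hb := Nat.div_add_mod' x H
      have hmod := Nat.mod_lt x hHpos
      set v := x / H * H with hv
      have hwx : v - 1 ≤ x := by omega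
      obtain ⟨y, hy, -, hy1, hy2⟩ := hJ (v - 1) (by omega)
      set h' := hexp (Nat.log 2 (v - 1)) with hh'
      have hle : h' ≤ hexp (Nat.log 2 x) := hexp_mono (Nat.log_mono_right hwx)
      have hdvd : 2 ^ h' ∣ v := (pow_dvd_pow 2 hle).trans (Dvd.intro_left _ rfl)
      have hHle : 2 ^ h' ≤ H := Nat.pow_le_pow_right (by norm_num) hle
      have hb' := Nat.div_add_mod' (v - 1) (2 ^ h')
      have hmod' := Nat.mod_lt (v - 1) (by positivity : 0 < 2 ^ h')
      have hup : (v - 1) / 2 ^ h' * 2 ^ h' + 2 ^ h' ≤ v := by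
        obtain ⟨e, he⟩ := hdvd
        have h1 : (v - 1) / 2 ^ h' < e := by
          rw [Nat.div_lt_iff_lt_mul (by positivity), mul_comm, ← he]; omega
        calc (v - 1) / 2 ^ h' * 2 ^ h' + 2 ^ h' = 2 ^ h' * ((v - 1) / 2 ^ h' + 1) := by ring
          _ ≤ 2 ^ h' * e := Nat.mul_le_mul_left _ h1
          _ = v := he.symm
      have hyr : y ∈ Set.range t := by
        rw [ht, Nat.range_nth_of_infinite hinf]; exact hy
      obtain ⟨m, rfl⟩ := hyr
      have h1 : n < m := hmono.lt_iff_lt.1 (by omega)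
      have h2 : m < n + 1 := hmono.lt_iff_lt.1 (show t m < x by omega)
      omega
    have key' : (t (n + 1) : ℝ) ≤ t n + 2 * 2 ^ hexp (Nat.log 2 (t (n + 1))) := by
      exact_mod_cast key
    linarith
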